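/- arXiv:2511.17000 — 2 statements merged into one kernel-verified Lean document; each statement's English description precedes it below -/
import Mathlib

section
/- For every s ≥ 1, t ≥ 4 and sufficiently large n, the maximum number of edges of a 3-graph on n vertices which is F_{P,t}-free and has matching number at most s equals s·C(n−s,2) + O(n) when s ≤ t−2, and s·t(n−s,t−1) + O(n) when s ≥ t−1. -/
open Finset

/-- Degree of a vertex in a 3-graph. -/
def degH {n : ℕ} (H : Finset (Finset (Fin n))) (v : Fin n) : ℕ :=
  (H.filter (fun e => v ∈ e)).card

/-- `H` is a 3-uniform hypergraph. -/
def Uniform3 {n : ℕ} (H : Finset (Finset (Fin n))) : Prop :=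
  ∀ e ∈ H, e.card = 3

/-- The matching number of `H` is at most `s`. -/
def MatchingAtMost {n : ℕ} (H : Finset (Finset (Fin n))) (s : ℕ) : Prop :=
  ∀ M ⊆ H, (M : Set (Finset (Fin n))).Pairwise (fun e f => Disjoint e f) → M.card ≤ s

/-- `H` contains a copy of the hypergraph with edge set `F`. -/
def HasCopy {α : Type*} [DecidableEq α] {n : ℕ}
    (F : Set (Finset α)) (H : Finset (Finset (Fin n))) : Prop :=
  ∃ f : α → Fin n, Function.Injective f ∧ ∀ e ∈ F, e.image f ∈ H

/-- Number of edges of the Turán graph `T(n, r)`. -/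
def turanEdges (n r : ℕ) : ℕ := (SimpleGraph.turanGraph n r).edgeFinset.card

/-- Edge set of the 3-graph `F_{P,t}` on `A ∪ [t]`, `A = Fin (t-1)`:
edges are `{aᵢ, i, j}` for `1 ≤ i < j ≤ t`. -/
def FPtEdges (t : ℕ) : Set (Finset (Fin (t - 1) ⊕ Fin t)) :=
  { e | ∃ (i : Fin (t - 1)) (j : Fin t), (i : ℕ) < (j : ℕ) ∧
      e = {Sum.inl i, Sum.inr (Fin.castLE (Nat.sub_le t 1) i), Sum.inr j} }


theorem aux_chain {α β : Type*} [DecidableEq α] [DecidableEq β] (R : α → β → β → Prop)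
    [∀ c u w, Decidable (R c u w)] :
    ∀ (k : ℕ) (C : Finset α) (W : Finset β), k ≤ C.card → W.Nonempty →
      (∀ u ∈ W, k = 0 ∨ k * ∑ c ∈ C, (W.filter (fun w => ¬ R c u w)).card < C.card * W.card) →
      ∃ (f : Fin k → α) (g : Fin (k+1) → β), Function.Injective f ∧ (∀ i, f i ∈ C) ∧
        (∀ i, g i ∈ W) ∧ ∀ (i : Fin k) (j : Fin (k+1)), i.castSucc < j →
          R (f i) (g i.castSucc) (g j) := by
  intro k
  induction k with
  | zero =>
    intro C W _ hW _
    obtain ⟨w, hw⟩ := hW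
    exact ⟨Fin.elim0, fun _ => w, fun i => i.elim0, fun i => i.elim0, fun _ => hw,
      fun i => i.elim0⟩
  | succ k ih =>
    intro C W hC hW hyp
    have hCne : C.Nonempty := by
      rw [← Finset.card_pos]; omega
    obtain ⟨⟨v, c⟩, hvc, hmin⟩ := Finset.exists_min_image (W ×ˢ C)
      (fun p => (W.filter (fun w => ¬ R p.2 p.1 w)).card) (hW.product hCne)
    rw [Finset.mem_product] at hvc
    obtain ⟨hv, hc⟩ := hvc
    simp only at hv hc
    set x := (W.filter (fun w => ¬ R c v w)).card with hx
    have hmin' : ∀ u ∈ W, ∀ d ∈ C, x ≤ (W.filter (fun w => ¬ R d u w)).card := by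
      intro u hu d hd
      exact hmin (u, d) (Finset.mem_product.2 ⟨hu, hd⟩)
    have hyp' : ∀ u ∈ W, (k+1) * ∑ c ∈ C, (W.filter (fun w => ¬ R c u w)).card
        < C.card * W.card := fun u hu => (hyp u hu).resolve_left (by omega)
    have hW' : (W.filter (fun w => R c v w)).card + x = W.card := by
      rw [hx]; exact Finset.card_filter_add_card_filter_not _
    have hkx : (k+1) * x < W.card := by
      have h1 : C.card * x ≤ ∑ c ∈ C, (W.filter (fun w => ¬ R c v w)).card := by
        have := Finset.card_nsmul_le_sum C (fun c => (W.filter (fun w => ¬ R c v w)).card) x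
          (fun d hd => hmin' v hv d hd)
        simpa using this
      have h2 := hyp' v hv
      have h3 : C.card * ((k+1) * x) < C.card * W.card := by
        calc C.card * ((k+1) * x) = (k+1) * (C.card * x) := by ring
          _ ≤ _ := Nat.mul_le_mul_left _ h1
          _ < _ := h2
      exact Nat.lt_of_mul_lt_mul_left h3
    set W' := W.filter (fun w => R c v w) with hW'def
    have hsub : W' ⊆ W := Finset.filter_subset _ _
    have hW'ne : W'.Nonempty := by
      rw [← Finset.card_pos]
      have : x ≤ (k+1) * x := Nat.le_mul_of_pos_left _ (by omega)
      omega
    have hCe : (C.erase c).card + 1 = C.card := Finset.card_erase_add_one hc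
    obtain ⟨f, g, hf, hfC, hg, hR⟩ := ih (C.erase c) W' (by omega) hW'ne (by
      intro u hu
      rcases Nat.eq_zero_or_pos k with h0 | hkpos
      · exact Or.inl h0
      right
      have hu' := hsub hu
      have hsum : ∑ d ∈ C.erase c, (W'.filter (fun w => ¬ R d u w)).card + x
          ≤ ∑ d ∈ C, (W.filter (fun w => ¬ R d u w)).card := by
        rw [← Finset.sum_erase_add _ _ hc]
        refine Nat.add_le_add (Finset.sum_le_sum fun d _ => ?_) (hmin' u hu' c hc)
        exact Finset.card_le_card (Finset.filter_subset_filter _ hsub)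
      have h2 := hyp' u hu'
      generalize ∑ d ∈ C.erase c, (W'.filter (fun w => ¬ R d u w)).card = σ at *
      generalize ∑ d ∈ C, (W.filter (fun w => ¬ R d u w)).card = tau at *
      have h3 : (k+1) * (σ + x) < C.card * W.card :=
        lt_of_le_of_lt (Nat.mul_le_mul_left _ hsum) h2
      generalize (C.erase c).card = a at *
      rw [← hCe, ← hW'] at h3
      rw [← hW'] at hkx
      generalize W'.card = b at *
      have ha : k ≤ a := by omega
      have hb : k * x < b := by nlinarith
      have hkey : (a - k : ℤ) * (b - k * x) ≥ 0 :=
        mul_nonneg (by omega) (by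
          have : ((k * x : ℕ) : ℤ) < b := by exact_mod_cast hb
          push_cast at this; linarith)
      zify at h3 ⊢
      have hk0 : (0:ℤ) < k := by exact_mod_cast hkpos
      have h4 : (k:ℤ) * ((k+1) * (σ + x)) < k * ((a+1) * (b + x)) :=
        mul_lt_mul_of_pos_left h3 hk0
      have h5 : (k+1:ℤ) * (k * σ) < (k+1) * (a * b) := by nlinarith
      exact lt_of_mul_lt_mul_left h5 (by linarith))
    refine ⟨Fin.cons c f, Fin.cons v g, ?_, ?_, ?_, ?_⟩
    · rw [Fin.cons_injective_iff]
      refine ⟨?_, hf⟩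
      rintro ⟨i, hi⟩
      have := hfC i
      rw [hi] at this
      simp at this
    · intro i
      refine Fin.cases ?_ (fun i => ?_) i
      · simpa using hc
      · simpa using Finset.mem_of_mem_erase (hfC i)
    · intro i
      refine Fin.cases ?_ (fun i => ?_) i
      · simpa using hv
      · simpa using hsub (hg i)
    · intro i j
      refine Fin.cases ?_ (fun i => ?_) i <;> refine Fin.cases ?_ (fun j => ?_) j
      · intro h; simp at h
      · intro _
        have := (Finset.mem_filter.1 (hg j)).2
        simpa using this
      · intro h; simp at h
      · intro h
        rw [← Fin.succ_castSucc] at h ⊢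
        simpa using hR i j (by simpa using h)

theorem aux_density {α β : Type*} [DecidableEq α] [DecidableEq β] (R : α → β → β → Prop)
    [∀ c u w, Decidable (R c u w)] (hsymm : ∀ c u w, R c u w → R c w u)
    (hirr : ∀ c u, ¬ R c u u)
    (k : ℕ) (hk : 1 ≤ k) (C : Finset α) (hC : k ≤ C.card) (W : Finset β)
    (hno : ¬ ∃ (f : Fin k → α) (g : Fin (k+1) → β), Function.Injective f ∧ (∀ i, f i ∈ C) ∧
        (∀ i, g i ∈ W) ∧ ∀ (i : Fin k) (j : Fin (k+1)), i.castSucc < j →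
          R (f i) (g i.castSucc) (g j)) :
    k * ∑ c ∈ C, ∑ u ∈ W, (W.filter (fun w => R c u w)).card
      ≤ C.card * (k-1) * (W.card ^ 2 + W.card) := by
  induction hn : W.card generalizing W with
  | zero =>
    have : W = ∅ := Finset.card_eq_zero.1 hn
    subst this
    simp
  | succ m ih =>
    have hWne : W.Nonempty := by rw [← Finset.card_pos]; omega
    have : ∃ u ∈ W, C.card * W.card ≤
        k * ∑ c ∈ C, (W.filter (fun w => ¬ R c u w)).card := by
      by_contra hcon
      push Not at hcon
      exact hno (aux_chain R k C W hC hWne (fun u hu => Or.inr (hcon u hu)))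
    obtain ⟨u, hu, hle⟩ := this
    have hd : ∑ c ∈ C, (W.filter (fun w => R c u w)).card +
        ∑ c ∈ C, (W.filter (fun w => ¬ R c u w)).card = C.card * W.card := by
      rw [← Finset.sum_add_distrib]
      simp [Finset.card_filter_add_card_filter_not]
    have ih' := ih (W.erase u) (by
      rintro ⟨f, g, h1, h2, h3, h4⟩
      exact hno ⟨f, g, h1, h2, fun i => Finset.mem_of_mem_erase (h3 i), h4⟩)
      (by rw [Finset.card_erase_of_mem hu]; omega)
    have hsplit : ∑ c ∈ C, ∑ u ∈ W, (W.filter (fun w => R c u w)).card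
        = ∑ c ∈ C, ∑ v ∈ W.erase u, ((W.erase u).filter (fun w => R c v w)).card
          + 2 * ∑ c ∈ C, (W.filter (fun w => R c u w)).card := by
      rw [Finset.mul_sum, ← Finset.sum_add_distrib]
      refine Finset.sum_congr rfl fun c _ => ?_
      rw [← Finset.sum_erase_add _ _ hu]
      have h1 : ∀ v ∈ W.erase u, (W.filter (fun w => R c v w)).card =
          ((W.erase u).filter (fun w => R c v w)).card + (if R c u v then 1 else 0) := by
        intro v hv
        rw [← Finset.insert_erase hu, Finset.filter_insert, Finset.erase_insert_eq_erase]
        have : R c v u ↔ R c u v := ⟨hsymm _ _ _, hsymm _ _ _⟩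
        by_cases h : R c u v
        · rw [if_pos (this.2 h), if_pos h, Finset.card_insert_of_notMem (by simp)]
          simp
        · rw [if_neg (fun h' => h (this.1 h')), if_neg h]
          simp
      rw [Finset.sum_congr rfl h1, Finset.sum_add_distrib, ← Finset.card_filter]
      have h2 : (W.erase u).filter (fun w => R c u w) = W.filter (fun w => R c u w) := by
        ext w
        simp only [Finset.mem_filter, Finset.mem_erase]
        constructor
        · rintro ⟨⟨_, h⟩, h'⟩; exact ⟨h, h'⟩
        · rintro ⟨h, h'⟩
          exact ⟨⟨fun e => hirr c u (e ▸ h'), h⟩, h'⟩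
      rw [h2]; ring
    rw [hsplit]
    obtain ⟨k, rfl⟩ : ∃ k', k = k' + 1 := ⟨k - 1, by omega⟩
    rw [hn] at hle hd
    simp only [Nat.add_sub_cancel] at ih' ⊢
    generalize ∑ c ∈ C, ∑ v ∈ W.erase u, ((W.erase u).filter (fun w => R c v w)).card = T at *
    generalize ∑ c ∈ C, (W.filter (fun w => R c u w)).card = D at *
    generalize ∑ c ∈ C, (W.filter (fun w => ¬ R c u w)).card = E at *
    have hD : (k+1) * D ≤ C.card * k * (m+1) := by
      have : (k+1) * D + (k+1) * E = (k+1) * (C.card * (m+1)) := by rw [← hd]; ring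
      nlinarith
    nlinarith

theorem aux_three {n : ℕ} {e : Finset (Fin n)} (he : e.card = 3) {v z : Fin n} (hv : v ∈ e)
    (hz : z ∈ e) (hne : v ≠ z) : ∃ w, w ≠ v ∧ w ≠ z ∧ e = {v, z, w} := by
  have h2 : ((e.erase v).erase z).card = 1 := by
    rw [Finset.card_erase_of_mem (Finset.mem_erase.2 ⟨hne.symm, hz⟩),
      Finset.card_erase_of_mem hv, he]
  obtain ⟨w, hw⟩ := Finset.card_eq_one.1 h2
  have hw' : w ∈ (e.erase v).erase z := by rw [hw]; simp
  simp only [Finset.mem_erase] at hw'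
  refine ⟨w, hw'.2.1, hw'.1, ?_⟩
  rw [← hw, Finset.insert_erase (Finset.mem_erase.2 ⟨hne.symm, hz⟩), Finset.insert_erase hv]

theorem aux_codeg {n : ℕ} (H : Finset (Finset (Fin n))) (hU : Uniform3 H) (v : Fin n)
    (Z : Finset (Fin n)) (hv : v ∉ Z) :
    (H.filter (fun e => v ∈ e ∧ ¬ Disjoint e Z)).card ≤ Z.card * n := by
  have hsub : H.filter (fun e => v ∈ e ∧ ¬ Disjoint e Z) ⊆
      (Z ×ˢ (univ : Finset (Fin n))).image (fun p => {v, p.1, p.2}) := by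
    intro e he
    simp only [Finset.mem_filter, Finset.not_disjoint_iff] at he
    obtain ⟨heH, hve, z, hze, hzZ⟩ := he
    obtain ⟨w, _, _, hw⟩ := aux_three (hU e heH) hve hze (fun h => hv (h ▸ hzZ))
    exact Finset.mem_image.2 ⟨(z, w), by simp [hzZ], hw.symm⟩
  calc _ ≤ _ := Finset.card_le_card hsub
    _ ≤ _ := Finset.card_image_le
    _ = _ := by simp

theorem aux_greedy {n : ℕ} (H : Finset (Finset (Fin n))) (hU : Uniform3 H) (D : ℕ)
    (X : Finset (Fin n)) : (∀ v ∈ X, D * n < degH H v) → ∀ B : Finset (Fin n), Disjoint X B →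
    B.card + 3 * X.card ≤ D →
    ∃ M ⊆ H, (M : Set (Finset (Fin n))).Pairwise (fun e f => Disjoint e f) ∧ M.card = X.card ∧
      ∀ e ∈ M, Disjoint e B := by
  induction X using Finset.induction_on with
  | empty =>
    intro _ B _ _
    exact ⟨∅, by simp, by simp, by simp, by simp⟩
  | insert v X hvX ih =>
    intro hdeg B hdis hcard
    rw [Finset.card_insert_of_notMem hvX] at hcard
    rw [Finset.disjoint_insert_left] at hdis
    have hlt : (H.filter (fun e => v ∈ e ∧ ¬ Disjoint e (B ∪ X))).card <
        (H.filter (fun e => v ∈ e)).card := by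
      have h1 := aux_codeg H hU v (B ∪ X) (by simp [hdis.1, hvX])
      have h2 := hdeg v (by simp)
      have h3 : (B ∪ X).card ≤ D := by
        have := Finset.card_union_le B X
        omega
      exact lt_of_le_of_lt (h1.trans (Nat.mul_le_mul_right _ h3)) h2
    obtain ⟨e, he, hne⟩ := Finset.exists_mem_notMem_of_card_lt_card hlt
    simp only [Finset.mem_filter] at he hne
    have hedis : Disjoint e (B ∪ X) := by
      by_contra h
      exact hne ⟨he.1, he.2, h⟩
    rw [Finset.disjoint_union_right] at hedis
    obtain ⟨M, hMH, hMd, hMc, hMB⟩ := ih (fun w hw => hdeg w (by simp [hw])) (B ∪ e)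
      (by rw [Finset.disjoint_union_right]; exact ⟨hdis.2, hedis.2.symm⟩)
      (by
        have := Finset.card_union_le B e
        rw [hU e he.1] at this
        omega)
    have hMe : ∀ f ∈ M, Disjoint f e := fun f hf =>
      (Finset.disjoint_union_right.1 (hMB f hf)).2
    have heM : e ∉ M := fun h => by
      have := hMe e h
      rw [Finset.disjoint_self_iff_empty] at this
      rw [this] at he
      simp at he
    refine ⟨insert e M, ?_, ?_, ?_, ?_⟩
    · exact Finset.insert_subset he.1 hMH
    · rw [Finset.coe_insert]
      refine hMd.insert ?_
      intro f hf _
      exact ⟨(hMe f hf).symm, hMe f hf⟩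
    · rw [Finset.card_insert_of_notMem heM, Finset.card_insert_of_notMem hvX, hMc]
    · intro f hf
      rcases Finset.mem_insert.1 hf with rfl | hf
      · exact hedis.1
      · exact (Finset.disjoint_union_right.1 (hMB f hf)).1

theorem aux_cover {n : ℕ} (s : ℕ) (H : Finset (Finset (Fin n))) (hU : Uniform3 H)
    (hM : MatchingAtMost H s) : ∃ S : Finset (Fin n), S.card ≤ s ∧
      (H.filter (fun e => Disjoint e S)).card ≤ 3 * s * (3 * (s + 1) * n) := by
  classical
  set D := 3 * (s + 1) with hD
  set S := univ.filter (fun v : Fin n => D * n < degH H v) with hS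
  refine ⟨S, ?_, ?_⟩
  · by_contra hcon
    push Not at hcon
    obtain ⟨X, hXS, hX⟩ := Finset.exists_subset_card_eq (show s + 1 ≤ S.card from hcon)
    obtain ⟨M, hMH, hMd, hMc, _⟩ := aux_greedy H hU D X
      (fun v hv => (Finset.mem_filter.1 (hXS hv)).2) ∅ (by simp) (by simp [hX, hD])
    have := hM M hMH hMd
    omega
  · set H' := H.filter (fun e => Disjoint e S) with hH'
    obtain ⟨M, hMm, hmax⟩ := Finset.exists_max_image
      (H'.powerset.filter
        (fun M : Finset (Finset (Fin n)) =>
          (M : Set (Finset (Fin n))).Pairwise (fun e f => Disjoint e f)))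
      Finset.card ⟨∅, by simp⟩
    simp only [Finset.mem_filter, Finset.mem_powerset] at hMm hmax
    have hH'H : H' ⊆ H := Finset.filter_subset _ _
    have hMs := hM M (hMm.1.trans hH'H) hMm.2
    have hZ : (M.biUnion id).card ≤ 3 * s := by
      calc _ ≤ M.card * 3 := Finset.card_biUnion_le_card_mul _ _ _
              (fun e he => (hU e (hH'H (hMm.1 he))).le)
        _ ≤ _ := by omega
    have hsub : H' ⊆ (M.biUnion id).biUnion (fun z => H.filter (fun e => z ∈ e)) := by
      intro e he
      by_contra hcon
      have hdis : ∀ f ∈ M, Disjoint e f := by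
        intro f hf
        rw [Finset.disjoint_left]
        intro z hze hzf
        apply hcon
        rw [Finset.mem_biUnion]
        exact ⟨z, Finset.mem_biUnion.2 ⟨f, hf, hzf⟩, Finset.mem_filter.2 ⟨hH'H he, hze⟩⟩
      have heM : e ∉ M := fun h => by
        have := hdis e h
        rw [Finset.disjoint_self_iff_empty] at this
        have h3 := hU e (hH'H he)
        rw [this] at h3
        simp at h3
      have := hmax (insert e M) ⟨Finset.insert_subset he hMm.1, by
        rw [Finset.coe_insert]
        refine hMm.2.insert ?_
        intro f hf _
        exact ⟨hdis f hf, (hdis f hf).symm⟩⟩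
      rw [Finset.card_insert_of_notMem heM] at this
      omega
    calc H'.card ≤ _ := Finset.card_le_card hsub
      _ ≤ (M.biUnion id).card * (D * n) := by
        apply Finset.card_biUnion_le_card_mul
        intro z hz
        rw [Finset.mem_biUnion] at hz
        obtain ⟨f, hf, hzf⟩ := hz
        have hfS := (Finset.mem_filter.1 (hMm.1 hf)).2
        have hzS : z ∉ S := Finset.disjoint_left.1 hfS hzf
        simp only [hS, Finset.mem_filter, Finset.mem_univ, true_and, not_lt] at hzS
        exact hzS
      _ ≤ _ := Nat.mul_le_mul_right _ hZ

theorem aux_count {n : ℕ} (H : Finset (Finset (Fin n))) (hU : Uniform3 H) (S : Finset (Fin n)) :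
    2 * H.card ≤ 2 * (H.filter (fun e => Disjoint e S)).card + 2 * (S.card * (S.card * n)) +
      ∑ c ∈ S, ∑ u ∈ Sᶜ, (Sᶜ.filter (fun w => ({c, u, w} : Finset (Fin n)) ∈ H)).card := by
  set A := H.filter (fun e => Disjoint e S)
  set B := S.biUnion (fun v => H.filter (fun e => v ∈ e ∧ ¬ Disjoint e (S.erase v)))
  set E := H.filter (fun e => ∃ c ∈ S, ∃ u ∈ Sᶜ, ∃ w ∈ Sᶜ, e = {c, u, w}) with hE
  have hB : B.card ≤ S.card * (S.card * n) := by
    apply Finset.card_biUnion_le_card_mul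
    intro v hv
    refine (aux_codeg H hU v (S.erase v) (by simp)).trans ?_
    exact Nat.mul_le_mul_right _ (Finset.card_le_card (Finset.erase_subset _ _))
  have hcov : H ⊆ A ∪ B ∪ E := by
    intro e he
    by_cases h1 : Disjoint e S
    · simp [A, he, h1]
    obtain ⟨c, hce, hcS⟩ := Finset.not_disjoint_iff.1 h1
    by_cases h2 : Disjoint e (S.erase c)
    · have h3 : (e.erase c).card = 2 := by rw [Finset.card_erase_of_mem hce, hU e he]
      obtain ⟨u, w, huw, h4⟩ := Finset.card_eq_two.1 h3
      have key : ∀ x ∈ e.erase c, x ∈ Sᶜ := by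
        intro x hx
        rw [Finset.mem_compl]
        intro hxS
        have hx' := Finset.mem_erase.1 hx
        exact Finset.disjoint_left.1 h2 hx'.2 (Finset.mem_erase.2 ⟨hx'.1, hxS⟩)
      refine Finset.mem_union_right _ (Finset.mem_filter.2 ⟨he, c, hcS, u, ?_, w, ?_, ?_⟩)
      · exact key u (by rw [h4]; simp)
      · exact key w (by rw [h4]; simp)
      · rw [← h4, Finset.insert_erase hce]
    · refine Finset.mem_union_left _ (Finset.mem_union_right _ ?_)
      exact Finset.mem_biUnion.2 ⟨c, hcS, Finset.mem_filter.2 ⟨he, hce, h2⟩⟩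
  have hEc : 2 * E.card ≤
      ∑ c ∈ S, ∑ u ∈ Sᶜ, (Sᶜ.filter (fun w => ({c, u, w} : Finset (Fin n)) ∈ H)).card := by
    set T := (S ×ˢ (Sᶜ ×ˢ Sᶜ)).filter
      (fun p => ({p.1, p.2.1, p.2.2} : Finset (Fin n)) ∈ H) with hT
    have hTc : T.card = 
        ∑ c ∈ S, ∑ u ∈ Sᶜ, (Sᶜ.filter (fun w => ({c, u, w} : Finset (Fin n)) ∈ H)).card := by
      simp only [hT, Finset.card_filter, Finset.sum_product]
    rw [← hTc]
    have hmaps : ∀ p ∈ T, ({p.1, p.2.1, p.2.2} : Finset (Fin n)) ∈ E := by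
      intro p hp
      simp only [hT, Finset.mem_filter, Finset.mem_product] at hp
      exact Finset.mem_filter.2 ⟨hp.2, _, hp.1.1, _, hp.1.2.1, _, hp.1.2.2, rfl⟩
    rw [Finset.card_eq_sum_card_fiberwise hmaps, mul_comm]
    have := Finset.card_nsmul_le_sum E
      (fun e => (T.filter (fun p => ({p.1, p.2.1, p.2.2} : Finset (Fin n)) = e)).card) 2 ?_
    · simpa using this
    intro e he
    obtain ⟨heH, c, hc, u, hu, w, hw, rfl⟩ := Finset.mem_filter.1 he
    have huw : u ≠ w := by
      rintro rfl
      have := hU _ heH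
      have h2 : ({c, u, u} : Finset (Fin n)).card ≤ 2 := by
        simpa using Finset.card_le_two (a := c) (b := u)
      omega
    have hsub : ({(c, u, w), (c, w, u)} : Finset (Fin n × Fin n × Fin n)) ⊆
        T.filter (fun p => ({p.1, p.2.1, p.2.2} : Finset (Fin n)) = {c, u, w}) := by
      have hcomm : ({c, w, u} : Finset (Fin n)) = {c, u, w} := by
        rw [Finset.pair_comm]
      intro p hp
      rcases Finset.mem_insert.1 hp with rfl | hp
      · simp only [hT, Finset.mem_filter, Finset.mem_product]
        exact ⟨⟨⟨hc, hu, hw⟩, heH⟩, trivial⟩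
      · rw [Finset.mem_singleton] at hp
        subst hp
        simp only [hT, Finset.mem_filter, Finset.mem_product]
        exact ⟨⟨⟨hc, hw, hu⟩, hcomm ▸ heH⟩, hcomm⟩
    have h2 := Finset.card_le_card hsub
    rwa [Finset.card_pair (by simp [huw])] at h2
  have h1 := Finset.card_le_card hcov
  have h2 := Finset.card_union_le (A ∪ B) E
  have h3 := Finset.card_union_le A B
  omega

theorem aux_copy {n k : ℕ} (H : Finset (Finset (Fin n))) (hU : Uniform3 H)
    (S : Finset (Fin n)) (f : Fin k → Fin n) (g : Fin (k+1) → Fin n)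
    (hf : Function.Injective f) (hfS : ∀ i, f i ∈ S) (hg : ∀ i, g i ∈ Sᶜ)
    (hR : ∀ (i : Fin k) (j : Fin (k+1)), i.castSucc < j →
      ({f i, g i.castSucc, g j} : Finset (Fin n)) ∈ H) : HasCopy (FPtEdges (k+1)) H := by
  refine ⟨Sum.elim f g, ?_, ?_⟩
  · have hlt : ∀ i j : Fin (k+1), i < j → g i ≠ g j := by
      intro i j hij he
      have hi : (i : ℕ) < k := by omega
      have := hU _ (hR ⟨i, hi⟩ j hij)
      have h2 : g (Fin.castSucc ⟨i, hi⟩) = g j := he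
      rw [h2] at this
      have h3 : ({f ⟨i, hi⟩, g j, g j} : Finset (Fin n)).card ≤ 2 := by
        simpa using Finset.card_le_two (a := f ⟨i, hi⟩) (b := g j)
      omega
    have hginj : Function.Injective g := by
      intro i j h
      rcases lt_trichotomy i j with h1 | h1 | h1
      · exact absurd h (hlt i j h1)
      · exact h1
      · exact absurd h.symm (hlt j i h1)
    refine Function.Injective.sumElim hf hginj ?_
    intro a b h
    have := hg b
    rw [← h, Finset.mem_compl] at this
    exact this (hfS a)
  · rintro e ⟨i, j, hij, rfl⟩
    have := hR i j hij
    simp only [Finset.image_insert, Finset.image_singleton, Sum.elim_inl, Sum.elim_inr]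
    exact this

theorem aux_upper1 (s n : ℕ) (H : Finset (Finset (Fin n))) (hU : Uniform3 H)
    (hM : MatchingAtMost H s) :
    2 * H.card ≤ s * n ^ 2 + 2 * (9 * s * (s + 1) + s * s) * n := by
  obtain ⟨S, hS, hA⟩ := aux_cover s H hU hM
  have h1 := aux_count H hU S
  have h2 : ∑ c ∈ S, ∑ u ∈ Sᶜ, (Sᶜ.filter (fun w => ({c, u, w} : Finset (Fin n)) ∈ H)).card
      ≤ s * n ^ 2 := by
    calc _ ≤ ∑ c ∈ S, ∑ u ∈ Sᶜ, n := by
          refine Finset.sum_le_sum fun c _ => Finset.sum_le_sum fun u _ => ?_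
          simpa using Finset.card_le_univ
            (Sᶜ.filter (fun w => ({c, u, w} : Finset (Fin n)) ∈ H))
      _ = S.card * (Sᶜ.card * n) := by simp
      _ ≤ s * (n * n) := by
          gcongr
          simpa using Finset.card_le_univ Sᶜ
      _ = _ := by ring
  have h3 : S.card * (S.card * n) ≤ s * (s * n) := by gcongr
  nlinarith

theorem aux_upper2 (s k n : ℕ) (hk : 1 ≤ k) (hks : k ≤ s) (H : Finset (Finset (Fin n)))
    (hU : Uniform3 H) (hF : ¬ HasCopy (FPtEdges (k+1)) H) (hM : MatchingAtMost H s) :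
    2 * k * H.card ≤ s * (k - 1) * (n ^ 2 + n) + 2 * k * (9 * s * (s + 1) + s * s) * n := by
  obtain ⟨S, hS, hA⟩ := aux_cover s H hU hM
  have h1 := aux_count H hU S
  have hcompl : Sᶜ.card ≤ n := by simpa using Finset.card_le_univ Sᶜ
  have h2 : k * ∑ c ∈ S, ∑ u ∈ Sᶜ,
      (Sᶜ.filter (fun w => ({c, u, w} : Finset (Fin n)) ∈ H)).card
      ≤ s * (k - 1) * (n ^ 2 + n) := by
    by_cases hSk : k ≤ S.card
    · refine (aux_density (fun c u w => ({c, u, w} : Finset (Fin n)) ∈ H) ?_ ?_ k hk S hSk Sᶜ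
        ?_).trans ?_
      · intro c u w h
        rwa [Finset.pair_comm]
      · intro c u h
        have := hU _ h
        have h3 : ({c, u, u} : Finset (Fin n)).card ≤ 2 := by
          simpa using Finset.card_le_two (a := c) (b := u)
        omega
      · rintro ⟨f, g, hf, hfS, hg, hR⟩
        exact hF (aux_copy H hU S f g hf hfS hg hR)
      · gcongr
    · have h2 : ∑ c ∈ S, ∑ u ∈ Sᶜ,
          (Sᶜ.filter (fun w => ({c, u, w} : Finset (Fin n)) ∈ H)).card ≤ (k - 1) * n ^ 2 := by
        calc _ ≤ ∑ c ∈ S, ∑ u ∈ Sᶜ, n := by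
              refine Finset.sum_le_sum fun c _ => Finset.sum_le_sum fun u _ => ?_
              simpa using Finset.card_le_univ
                (Sᶜ.filter (fun w => ({c, u, w} : Finset (Fin n)) ∈ H))
          _ = S.card * (Sᶜ.card * n) := by simp
          _ ≤ (k - 1) * (n * n) := by
              gcongr
              omega
          _ = _ := by ring
      calc _ ≤ s * ((k - 1) * n ^ 2) := Nat.mul_le_mul hks h2
        _ = s * (k - 1) * (n ^ 2) := by ring
        _ ≤ _ := by gcongr; omega
  have h3 : S.card * (S.card * n) ≤ s * (s * n) := by gcongr
  have h4 : 2 * H.card ≤ 2 * (9 * s * (s + 1) + s * s) * n +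
      ∑ c ∈ S, ∑ u ∈ Sᶜ, (Sᶜ.filter (fun w => ({c, u, w} : Finset (Fin n)) ∈ H)).card := by
    nlinarith
  have h5 := Nat.mul_le_mul_left k h4
  rw [mul_add] at h5
  calc 2 * k * H.card = k * (2 * H.card) := by ring
    _ ≤ _ := h5
    _ ≤ _ := by
      have : k * (2 * (9 * s * (s + 1) + s * s) * n) =
        2 * k * (9 * s * (s + 1) + s * s) * n := by ring
      omega

theorem aux_struct {V : Type*} {k : ℕ} (hk : 2 ≤ k) (a : Fin k → V) (b : Fin (k+1) → V)
    (lo : V → Prop) (A : V → V → Prop) (ha : Function.Injective a)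
    (hab : ∀ i j, a i ≠ b j)
    (hE : ∀ (i : Fin k) (j : Fin (k+1)), i.castSucc < j →
      (lo (a i) ∧ ¬ lo (b i.castSucc) ∧ ¬ lo (b j) ∧ A (b i.castSucc) (b j)) ∨
      (lo (b i.castSucc) ∧ ¬ lo (a i) ∧ ¬ lo (b j) ∧ A (a i) (b j)) ∨
      (lo (b j) ∧ ¬ lo (a i) ∧ ¬ lo (b i.castSucc))) :
    ∃ (h : Fin k → V) (g : Fin (k+1) → V), Function.Injective h ∧ (∀ i, lo (h i)) ∧
      ∀ (i : Fin k) (j : Fin (k+1)), i.castSucc < j → A (g i.castSucc) (g j) := by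
  obtain ⟨k, rfl⟩ : ∃ k', k = k' + 2 := ⟨k - 2, by omega⟩
  have hpos : ∀ j : Fin (k+2+1), j ≠ 0 → (0 : Fin (k+2)).castSucc < j := by
    intro j hj
    exact Fin.pos_of_ne_zero hj
  have two : ∀ i j : Fin (k+2+1), i < j → lo (b i) → lo (b j) → False := by
    intro i j hij h1 h2
    have := hE ⟨i, by omega⟩ j hij
    have e : (Fin.castSucc ⟨i, by omega⟩ : Fin (k+2+1)) = i := rfl
    rw [e] at this
    tauto
  by_cases h0 : lo (b 0)
  · have h1 : ∀ j : Fin (k+2+1), j ≠ 0 → ¬ lo (b j) := fun j hj h =>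
      two 0 j (Fin.pos_of_ne_zero hj) h0 h
    have h2 : ∀ j : Fin (k+2+1), j ≠ 0 → A (a 0) (b j) := by
      intro j hj
      have h3 := hE 0 j (hpos j hj)
      have h4 := h1 j hj
      have e : b (0 : Fin (k+2)).castSucc = b 0 := rfl
      rw [e] at h3
      tauto
    have h3 : ∀ (i : Fin (k+1)) (j : Fin (k+2+1)), i.succ.castSucc < j →
        lo (a i.succ) ∧ A (b i.succ.castSucc) (b j) := by
      intro i j hij
      have h3 := hE _ j hij
      have h4 := h1 j (by rintro rfl; exact absurd hij (by simp))
      have h5 := h1 i.succ.castSucc (by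
        rw [← Fin.succ_castSucc]; exact Fin.succ_ne_zero _)
      tauto
    refine ⟨Fin.cons (b 0) (fun i => a i.succ), Fin.cons (a 0) (fun i => b i.succ), ?_, ?_, ?_⟩
    · rw [Fin.cons_injective_iff]
      refine ⟨?_, fun i j h => Fin.succ_injective _ (ha h)⟩
      rintro ⟨i, hi⟩
      exact hab _ _ hi
    · intro i
      refine Fin.cases ?_ (fun i => ?_) i
      · simpa using h0
      · simpa using (h3 i (Fin.last _) (Fin.castSucc_lt_last _)).1
    · intro i j
      refine Fin.cases ?_ (fun i => ?_) i <;> refine Fin.cases ?_ (fun j => ?_) j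
      · intro h; simp at h
      · intro _
        simpa using h2 j.succ (Fin.succ_ne_zero _)
      · intro h; simp at h
      · intro h
        have := (h3 i j.succ h).2
        rw [← Fin.succ_castSucc] at this ⊢
        simpa using this
  · have h1 : ∀ j, ¬ lo (b j) := by
      intro j hj
      have hj0 : j ≠ 0 := by rintro rfl; exact h0 hj
      have e : b (0 : Fin (k+2)).castSucc = b 0 := rfl
      have h2 := hE 0 j (hpos j hj0)
      rw [e] at h2
      obtain ⟨j', hj'0, hj'⟩ : ∃ j' : Fin (k+2+1), j' ≠ 0 ∧ j' ≠ j := by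
        by_cases h : j = 1
        · refine ⟨2, ?_, ?_⟩
          · simp [Fin.ext_iff, Nat.mod_eq_of_lt]
          · rw [h]; simp [Fin.ext_iff, Nat.mod_eq_of_lt]
        · exact ⟨1, by simp, fun h' => h h'.symm⟩
      have h3 := hE 0 j' (hpos j' hj'0)
      rw [e] at h3
      have h4 : lo (b j') := by tauto
      rcases lt_or_gt_of_ne hj' with h | h
      · exact two _ _ h h4 hj
      · exact two _ _ h hj h4
    refine ⟨a, b, ha, ?_, ?_⟩
    · intro i
      have h2 := hE i (Fin.last _) (Fin.castSucc_lt_last _)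
      have h3 := h1 (Fin.last _)
      have h4 := h1 i.castSucc
      tauto
    · intro i j hij
      have h2 := hE i j hij
      have h3 := h1 j
      have h4 := h1 i.castSucc
      tauto

theorem aux_perm {s m : ℕ} (G : SimpleGraph (Fin m)) (p q r : Fin (s+m)) (hpq : p ≠ q)
    (hpr : p ≠ r) (hqr : q ≠ r) (c : Fin s) (x y : Fin m) (hxy : G.Adj x y)
    (h : ({p, q, r} : Finset (Fin (s+m))) = {Fin.castAdd m c, Fin.natAdd s x, Fin.natAdd s y}) :
    (p.val < s ∧ ¬ q.val < s ∧ ¬ r.val < s ∧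
      ∃ x y, q = Fin.natAdd s x ∧ r = Fin.natAdd s y ∧ G.Adj x y) ∨
    (q.val < s ∧ ¬ p.val < s ∧ ¬ r.val < s ∧
      ∃ x y, p = Fin.natAdd s x ∧ r = Fin.natAdd s y ∧ G.Adj x y) ∨
    (r.val < s ∧ ¬ p.val < s ∧ ¬ q.val < s) := by
  have h1 : p ∈ ({p, q, r} : Finset (Fin (s+m))) := by simp
  have h2 : q ∈ ({p, q, r} : Finset (Fin (s+m))) := by simp
  have h3 : r ∈ ({p, q, r} : Finset (Fin (s+m))) := by simp
  rw [h] at h1 h2 h3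
  simp only [Finset.mem_insert, Finset.mem_singleton] at h1 h2 h3
  clear h
  rcases h1 with rfl | rfl | rfl <;> rcases h2 with rfl | rfl | rfl <;>
    first | exact absurd rfl hpq | skip
  all_goals rcases h3 with rfl | rfl | rfl <;>
    first | exact absurd rfl hpr | exact absurd rfl hqr | skip
  · left
    exact ⟨by simp, by simp, by simp, _, _, rfl, rfl, hxy⟩
  · left
    exact ⟨by simp, by simp, by simp, _, _, rfl, rfl, hxy.symm⟩
  · right; left
    exact ⟨by simp, by simp, by simp, _, _, rfl, rfl, hxy⟩
  · right; right
    exact ⟨by simp, by simp, by simp⟩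
  · right; left
    exact ⟨by simp, by simp, by simp, _, _, rfl, rfl, hxy.symm⟩
  · right; right
    exact ⟨by simp, by simp, by simp⟩

theorem aux_lower (s m k : ℕ) (hk : 2 ≤ k) (G : SimpleGraph (Fin m)) [DecidableRel G.Adj]
    (hG : s < k ∨ G.CliqueFree (k+1)) :
    ∃ H : Finset (Finset (Fin (s+m))), Uniform3 H ∧ ¬ HasCopy (FPtEdges (k+1)) H ∧
      MatchingAtMost H s ∧ H.card = s * G.edgeFinset.card := by
  set φ : Fin s × Sym2 (Fin m) → Finset (Fin (s+m)) :=
    fun p => insert (Fin.castAdd m p.1) (p.2.toFinset.image (Fin.natAdd s)) with hφ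
  set H := ((univ : Finset (Fin s)) ×ˢ G.edgeFinset).image φ with hH
  have hcn : ∀ (c : Fin s) (x : Fin m), Fin.castAdd m c ≠ Fin.natAdd s x := by
    intro c x h
    have := congrArg Fin.val h
    simp at this
    omega
  have hmem : ∀ e ∈ H, ∃ (c : Fin s) (x y : Fin m), G.Adj x y ∧
      e = {Fin.castAdd m c, Fin.natAdd s x, Fin.natAdd s y} := by
    intro e he
    obtain ⟨⟨c, z⟩, hp, rfl⟩ := Finset.mem_image.1 he
    have hz := (Finset.mem_product.1 hp).2
    simp only at hz
    induction z using Sym2.ind with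
    | _ x y =>
      refine ⟨c, x, y, by simpa using hz, ?_⟩
      ext v
      simp [hφ, eq_comm]
  refine ⟨H, ?_, ?_, ?_, ?_⟩
  · intro e he
    obtain ⟨c, x, y, hxy, rfl⟩ := hmem e he
    rw [Finset.card_eq_three]
    exact ⟨_, _, _, hcn _ _, hcn _ _, fun h => hxy.ne (Fin.natAdd_injective _ _ h), rfl⟩
  · rintro ⟨f, hf, hF⟩
    obtain ⟨h, g, hinj, hlo, hA⟩ := aux_struct hk (fun i : Fin k => f (Sum.inl i))
      (fun j : Fin (k+1) => f (Sum.inr j)) (fun v => v.val < s)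
      (fun u v => ∃ x y, u = Fin.natAdd s x ∧ v = Fin.natAdd s y ∧ G.Adj x y)
      (fun i j h => Sum.inl_injective (hf h)) (fun i j h => by simpa using hf h)
      (by
        intro i j hij
        have h1 := hF _ (⟨i, j, hij, rfl⟩ : _ ∈ FPtEdges (k+1))
        simp only [Finset.image_insert, Finset.image_singleton] at h1
        obtain ⟨c, x, y, hxy, he⟩ := hmem _ h1
        refine aux_perm G _ _ _ ?_ ?_ ?_ c x y hxy he
        · exact fun h => by simpa using hf h
        · exact fun h => by simpa using hf h
        · intro h
          have := Sum.inr_injective (hf h)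
          exact hij.ne this)
    rcases hG with hsk | hcf
    · have := Fintype.card_le_of_injective (fun i : Fin k => (⟨(h i).val, hlo i⟩ : Fin s)) (by
        intro i j hij
        apply hinj
        apply Fin.ext
        simpa using hij)
      simp at this
      omega
    · have hx : ∀ j, ∃ x, g j = Fin.natAdd s x := by
        intro j
        by_cases hj : j = 0
        · subst hj
          obtain ⟨x, y, h1, -, -⟩ := hA ⟨0, by omega⟩ (Fin.last _) (Fin.castSucc_lt_last _)
          exact ⟨x, h1⟩
        · obtain ⟨x, y, -, h1, -⟩ := hA ⟨0, by omega⟩ j (Fin.pos_of_ne_zero hj)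
          exact ⟨y, h1⟩
      choose x hx using hx
      have hadj : ∀ i j, i < j → G.Adj (x i) (x j) := by
        intro i j hij
        obtain ⟨u, v, h1, h2, h3⟩ := hA ⟨i, by omega⟩ j hij
        have e : (Fin.castSucc ⟨i, by omega⟩ : Fin (k+1)) = i := rfl
        rw [e, hx i] at h1
        rw [hx j] at h2
        rw [Fin.natAdd_injective _ _ h1, Fin.natAdd_injective _ _ h2]
        exact h3
      have hadj' : ∀ i j, i ≠ j → G.Adj (x i) (x j) := by
        intro i j hij
        rcases lt_or_gt_of_ne hij with h | h
        · exact hadj i j h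
        · exact (hadj j i h).symm
      have hxinj : Function.Injective x := by
        intro i j h
        by_contra hne
        exact (hadj' i j hne).ne h
      exact SimpleGraph.IsContained.not_cliqueFree
        (SimpleGraph.Embedding.isContained (⟨⟨x, hxinj⟩, by
          intro i j
          simp only [Function.Embedding.coeFn_mk, SimpleGraph.top_adj]
          exact ⟨fun h h' => h.ne (by rw [h']), hadj' i j⟩⟩ :
          (⊤ : SimpleGraph (Fin (k+1))) ↪g G)) hcf
  · intro M hMH hMd
    have hc : ∀ e ∈ M, ∃ c : Fin s, Fin.castAdd m c ∈ e := by
      intro e he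
      obtain ⟨c, x, y, hxy, rfl⟩ := hmem e (hMH he)
      exact ⟨c, by simp⟩
    by_cases hs : s = 0
    · subst hs
      rcases M.eq_empty_or_nonempty with h | ⟨e, he⟩
      · simp [h]
      · obtain ⟨c, -⟩ := hmem e (hMH he)
        exact c.elim0
    haveI : Nonempty (Fin s) := ⟨⟨0, by omega⟩⟩
    choose! c hc using hc
    have := Finset.card_le_card_of_injOn (s := M) (t := (univ : Finset (Fin s))) c
      (by intro e _; simp) (by
        intro e he f hf hef
        by_contra hne
        have h1 := hMd he hf hne
        have h2 := hc e he
        have h3 := hc f hf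
        rw [hef] at h2
        exact Finset.disjoint_left.1 h1 h2 h3)
    simpa using this
  · rw [hH, Finset.card_image_of_injOn]
    · simp
    · rintro ⟨c, z⟩ _ ⟨c', z'⟩ _ h
      have h1 : ∀ v, v ∈ φ (c, z) ↔ v ∈ φ (c', z') := fun v => by rw [h]
      have hc : c = c' := by
        have := (h1 (Fin.castAdd m c)).1 (by simp [hφ])
        simp only [hφ, Finset.mem_insert, Finset.mem_image] at this
        rcases this with h | ⟨x, _, h⟩
        · exact Fin.castAdd_injective _ _ h
        · exact absurd h.symm (hcn _ _)
      have key : ∀ (c : Fin s) (z : Sym2 (Fin m)) (x : Fin m),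
          Fin.natAdd s x ∈ φ (c, z) ↔ x ∈ z := by
        intro c z x
        simp only [hφ, Finset.mem_insert, Finset.mem_image, Sym2.mem_toFinset]
        constructor
        · rintro (h | ⟨y, hy, h⟩)
          · exact absurd h.symm (hcn _ _)
          · rwa [← Fin.natAdd_injective _ _ h]
        · exact fun h => Or.inr ⟨x, h, rfl⟩
      have hz : z = z' := by
        apply Sym2.ext
        intro x
        rw [← key c z x, h1, key]
      rw [hc, hz]

theorem aux_turan (m k : ℕ) (hk : 1 ≤ k) :
    (k - 1) * m ^ 2 ≤ 2 * k * turanEdges m k + 2 * k + k ^ 3 := by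
  rw [turanEdges, SimpleGraph.card_edgeFinset_turanGraph]
  have hr : m % k < k := Nat.mod_lt _ hk
  have hrm : m % k ≤ m := Nat.mod_le _ _
  set r := m % k
  have h1 : (m ^ 2 - r ^ 2) + r ^ 2 = m ^ 2 :=
    Nat.sub_add_cancel (Nat.pow_le_pow_left hrm 2)
  generalize m ^ 2 - r ^ 2 = d at *
  have h2 := Nat.div_add_mod (d * (k-1)) (2 * k)
  have h3 := Nat.mod_lt (d * (k-1)) (show 2 * k > 0 by omega)
  have h4 : r ^ 2 * (k - 1) ≤ k ^ 3 := by
    calc r ^ 2 * (k - 1) ≤ k ^ 2 * k := by gcongr; omega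
      _ = _ := by ring
  rw [← h1, mul_add, mul_add (2 * k)]
  have h5 : (k - 1) * r ^ 2 = r ^ 2 * (k - 1) := mul_comm _ _
  have h6 : (k - 1) * d = d * (k - 1) := mul_comm _ _
  omega

theorem stmt_8 (s t : ℕ) (hs : 1 ≤ s) (ht : 4 ≤ t) :
    ∃ C n₀ : ℕ, ∀ n ≥ n₀,
      (s ≤ t - 2 →
        (∀ H : Finset (Finset (Fin n)), Uniform3 H → ¬ HasCopy (FPtEdges t) H →
            MatchingAtMost H s → H.card ≤ s * (n - s).choose 2 + C * n) ∧
        (∃ H : Finset (Finset (Fin n)), Uniform3 H ∧ ¬ HasCopy (FPtEdges t) H ∧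
            MatchingAtMost H s ∧ s * (n - s).choose 2 ≤ H.card + C * n)) ∧
      (t - 1 ≤ s →
        (∀ H : Finset (Finset (Fin n)), Uniform3 H → ¬ HasCopy (FPtEdges t) H →
            MatchingAtMost H s → H.card ≤ s * turanEdges (n - s) (t - 1) + C * n) ∧
        (∃ H : Finset (Finset (Fin n)), Uniform3 H ∧ ¬ HasCopy (FPtEdges t) H ∧
            MatchingAtMost H s ∧ s * turanEdges (n - s) (t - 1) ≤ H.card + C * n)) := by
  obtain ⟨k, rfl⟩ : ∃ k, t = k + 1 := ⟨t - 1, by omega⟩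
  refine ⟨(9 * s * (s + 1) + s * s) + s * (2 + k ^ 2) + 2 * s ^ 2, s + 1, ?_⟩
  intro n hn
  obtain ⟨m, rfl⟩ : ∃ m, n = s + m := ⟨n - s, by omega⟩
  have hm : 1 ≤ m := by omega
  simp only [Nat.add_sub_cancel, Nat.add_sub_cancel_left]
  refine ⟨fun hsk => ⟨?_, ?_⟩, fun hks => ⟨?_, ?_⟩⟩
  · intro H hU _ hM
    have h1 := aux_upper1 s (s+m) H hU hM
    have h2 : 2 * m.choose 2 = m * (m - 1) := by
      rw [Nat.choose_two_right]
      exact Nat.mul_div_cancel' (Nat.even_mul_pred_self m).two_dvd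
    obtain ⟨m, rfl⟩ : ∃ m', m = m' + 1 := ⟨m - 1, by omega⟩
    simp only [Nat.add_sub_cancel] at h2
    generalize (m+1).choose 2 = c at *
    have h3 : s * (2 * c) = s * ((m+1) * m) := by rw [h2]
    generalize 9 * s * (s + 1) + s * s = K at *
    have h4 : 0 ≤ s * k ^ 2 * (s + (m+1)) := Nat.zero_le _
    nlinarith [Nat.zero_le (s ^ 2 * m), Nat.zero_le (s ^ 3), Nat.zero_le (s * m),
      Nat.zero_le (s ^ 2), Nat.zero_le s]
  · obtain ⟨H, h1, h2, h3, h4⟩ := aux_lower s m k (by omega) ⊤ (Or.inl (by omega))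
    refine ⟨H, h1, h2, h3, ?_⟩
    rw [h4, SimpleGraph.card_edgeFinset_top_eq_card_choose_two]
    simp
  · intro H hU hF hM
    have h1 := aux_upper2 s k (s+m) (by omega) hks H hU hF hM
    have h2 := aux_turan m k (by omega)
    generalize turanEdges m k = T at *
    generalize 9 * s * (s + 1) + s * s = K at *
    have h3 : s * ((k-1) * m ^ 2) ≤ s * (2 * k * T + 2 * k + k ^ 3) :=
      Nat.mul_le_mul_left _ h2
    have h4 : s * (k - 1) * ((s+m)^2 + (s+m)) =
      s * ((k-1) * m ^ 2) + s * (k-1) * (2 * s * m + s ^ 2 + s + m) := by ring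
    have h5 : s * (k-1) * (2 * s * m + s ^ 2 + s + m) ≤
        s * k * (2 * s * m + s ^ 2 + s + m) := by gcongr; omega
    have h6 : s * (2 * k + k ^ 3) * 1 ≤ s * (2 * k + k ^ 3) * (s + m) :=
      Nat.mul_le_mul_left _ (by omega)
    have h7 : 2 * k * H.card ≤
        2 * k * (s * T + (K + s * (2 + k ^ 2) + 2 * s ^ 2) * (s + m)) := by
      have e : 2 * k * (s * T + (K + s * (2 + k ^ 2) + 2 * s ^ 2) * (s + m)) =
        s * (2 * k * T) + 2 * k * K * (s + m) + s * (2 * k + k ^ 3) * (s + m)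
        + s * k * (2 * s * m + s ^ 2 + s + m)
        + (s * k * (s + m) + s * k ^ 3 * (s + m) + 2 * s ^ 2 * k * m + 3 * s ^ 3 * k) := by ring
      rw [e]
      have e2 : s * (2 * k * T + 2 * k + k ^ 3) = s * (2 * k * T) + s * (2 * k + k ^ 3) * 1 := by
        ring
      omega
    exact Nat.le_of_mul_le_mul_left h7 (by omega)
  · obtain ⟨H, h1, h2, h3, h4⟩ := aux_lower s m k (by omega) (SimpleGraph.turanGraph m k)
      (Or.inr (SimpleGraph.turanGraph_cliqueFree (by omega)))
    refine ⟨H, h1, h2, h3, ?_⟩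
    rw [h4, turanEdges]
    exact Nat.le_add_right _ _
end

section
/- Let n ≥ 12s². Then the maximum number of edges of an n-vertex 3-graph that is F_{3,2}-free and has matching number at most s equals s·C(n−s,2), and the unique extremal hypergraph (up to isomorphism) is H(n,s): with vertex set A ∪ B, |A| = s, |B| = n−s, and edges all triples with exactly one vertex in A and two in B. -/
open Finset

/-- Edge set of the 3-graph `F_{3,2}` on `{1,…,5}` (as `Fin 5`):
edges `123, 145, 245, 345`. -/
def F32Edges : Set (Finset (Fin 5)) :=
  {({0, 1, 2} : Finset (Fin 5)), {0, 3, 4}, {1, 3, 4}, {2, 3, 4}}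

/-- The 3-graph `H(n,s)`: all triples with exactly one vertex in the set
`A` of the first `s` vertices (and two in `B`). -/
def Hns (n s : ℕ) : Finset (Finset (Fin n)) :=
  Finset.univ.filter (fun e => e.card = 3 ∧ (e.filter (fun v : Fin n => (v : ℕ) < s)).card = 1)


def HA {n : ℕ} (A : Finset (Fin n)) : Finset (Finset (Fin n)) :=
  Finset.univ.filter (fun e => e.card = 3 ∧ (e ∩ A).card = 1)

lemma HA_card {n : ℕ} (A : Finset (Fin n)) :
    (HA A).card = A.card * (n - A.card).choose 2 := by
  have h : (HA A).card = (A ×ˢ powersetCard 2 Aᶜ).card := by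
    symm
    apply Finset.card_bij (fun p _ => insert p.1 p.2)
    · rintro ⟨a, p⟩ hp
      simp only [mem_product, mem_powersetCard] at hp
      obtain ⟨ha, hp, hc⟩ := hp
      have hap : a ∉ p := fun h => by simpa [ha] using hp h
      have hpA : p ∩ A = ∅ := by
        ext x; simp only [mem_inter, notMem_empty, iff_false, not_and]
        intro hx; simpa using hp hx
      simp [HA, hap, hc, insert_inter_of_mem ha, hpA]
    · rintro ⟨a, p⟩ hp ⟨b, q⟩ hq h
      simp only [mem_product, mem_powersetCard] at hp hq
      obtain ⟨ha, hp, hc⟩ := hp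
      obtain ⟨hb, hq, hd⟩ := hq
      simp only at h
      have hab : a = b := by
        have : a ∈ insert b q := h ▸ mem_insert_self a p
        rcases mem_insert.1 this with h | h
        · exact h
        · have := hq h; simp [ha] at this
      subst hab
      have h1 : a ∉ p := fun h => by simpa [ha] using hp h
      have h2 : a ∉ q := fun h => by simpa [ha] using hq h
      have := congrArg (fun e => e.erase a) h
      simp [h1, h2] at this
      simp [this]
    · intro e he
      simp only [HA, mem_filter, mem_univ, true_and] at he
      obtain ⟨h3, h1⟩ := he
      obtain ⟨a, ha⟩ := card_eq_one.1 h1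
      have hae : a ∈ e ∩ A := by rw [ha]; simp
      rw [mem_inter] at hae
      refine ⟨(a, e.erase a), ?_, ?_⟩
      · simp only [mem_product, mem_powersetCard]
        refine ⟨hae.2, ?_, by rw [card_erase_of_mem hae.1, h3]⟩
        intro x hx
        rw [mem_compl]
        intro hxA
        have : x ∈ e ∩ A := mem_inter.2 ⟨mem_of_mem_erase hx, hxA⟩
        rw [ha, mem_singleton] at this
        exact (ne_of_mem_erase hx) this
      · exact insert_erase hae.1
  rw [h, card_product, card_powersetCard, card_compl, Fintype.card_fin]

lemma star_card {n : ℕ} {H : Finset (Finset (Fin n))} (hU : Uniform3 H) (u v : Fin n) (huv : u ≠ v) :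
    (H.filter (fun e => u ∈ e ∧ v ∈ e)).card ≤ n - 2 := by
  have : H.filter (fun e => u ∈ e ∧ v ∈ e) ⊆ ({u, v}ᶜ : Finset (Fin n)).image (fun w => {u, v, w}) := by
    intro e he
    rw [mem_filter] at he
    obtain ⟨he, hu, hv⟩ := he
    have h3 := hU e he
    have h1 : ((e.erase u).erase v).card = 1 := by
      rw [card_erase_of_mem, card_erase_of_mem hu, h3]
      exact mem_erase.2 ⟨huv.symm, hv⟩
    obtain ⟨w, hw⟩ := card_eq_one.1 h1
    have hwe : w ∈ (e.erase u).erase v := by rw [hw]; simp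
    simp only [mem_erase] at hwe
    rw [mem_image]
    refine ⟨w, by simp [hwe.1, hwe.2.1], ?_⟩
    rw [← hw, insert_erase (mem_erase.2 ⟨huv.symm, hv⟩), insert_erase hu]
  refine (card_le_card this).trans (card_image_le.trans ?_)
  rw [card_compl, Fintype.card_fin, card_pair huv]

lemma deg_card {n : ℕ} {H : Finset (Finset (Fin n))} (hU : Uniform3 H) (v : Fin n) :
    (H.filter (fun e => v ∈ e)).card ≤ (n - 1).choose 2 := by
  have : (H.filter (fun e => v ∈ e)).card ≤ (powersetCard 2 ({v}ᶜ : Finset (Fin n))).card := by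
    apply card_le_card_of_injOn (fun e => e.erase v)
    · intro e he
      simp only [coe_filter, Set.mem_ofPred_eq] at he
      rw [mem_coe, mem_powersetCard]
      refine ⟨fun x hx => by simpa using ne_of_mem_erase hx, by rw [card_erase_of_mem he.2, hU e he.1]⟩
    · intro e he f hf h
      simp only [coe_filter, Set.mem_ofPred_eq] at he hf
      simp only at h
      rw [← insert_erase he.2, h, insert_erase hf.2]
  refine this.trans ?_
  rw [card_powersetCard, card_compl, Fintype.card_fin, card_singleton]

/-- the F32 condition -/
lemma f32 {n : ℕ} {H : Finset (Finset (Fin n))} (hF : ¬ HasCopy F32Edges H)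
    {a b c d e : Fin n} (hab : a ≠ b) (hac : a ≠ c) (had : a ≠ d) (hae : a ≠ e)
    (hbc : b ≠ c) (hbd : b ≠ d) (hbe : b ≠ e) (hcd : c ≠ d) (hce : c ≠ e) (hde : d ≠ e)
    (h1 : {a, b, c} ∈ H) (h2 : {a, d, e} ∈ H) (h3 : {b, d, e} ∈ H) (h4 : {c, d, e} ∈ H) : False := by
  apply hF
  refine ⟨![a, b, c, d, e], ?_, ?_⟩
  · intro i j hij
    fin_cases i <;> fin_cases j <;> simp_all
  · intro g hg
    simp only [F32Edges, Set.mem_insert_iff, Set.mem_singleton_iff] at hg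
    rcases hg with rfl | rfl | rfl | rfl <;> simpa [image_insert]

lemma Hns_eq (n s : ℕ) : Hns n s = HA (Finset.univ.filter (fun v : Fin n => (v : ℕ) < s)) := by
  ext e
  simp only [Hns, HA, mem_filter, mem_univ, true_and]
  have : e ∩ Finset.univ.filter (fun v : Fin n => (v : ℕ) < s) = e.filter (fun v : Fin n => (v : ℕ) < s) := by
    ext x; simp
  rw [this]

lemma HA_free {n : ℕ} (A : Finset (Fin n)) : ¬ HasCopy F32Edges (HA A) := by
  rintro ⟨f, hf, h⟩
  have key : ∀ i j k : Fin 5, i ≠ j → i ≠ k → j ≠ k → ({i, j, k} : Finset (Fin 5)) ∈ F32Edges →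
      (if f i ∈ A then 1 else 0) + (if f j ∈ A then 1 else 0) + (if f k ∈ A then 1 else 0) = 1 := by
    intro i j k hij hik hjk he
    have := h _ he
    simp only [HA, mem_filter, mem_univ, true_and] at this
    have h1 := this.2
    rw [← filter_mem_eq_inter, card_filter, sum_image (fun x _ y _ h => hf h)] at h1
    rw [sum_insert (by simp [hij, hik]), sum_insert (by simp [hjk]), sum_singleton] at h1
    omega
  have k1 := key 0 1 2 (by decide) (by decide) (by decide) (by simp [F32Edges])
  have k2 := key 0 3 4 (by decide) (by decide) (by decide) (by simp [F32Edges])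
  have k3 := key 1 3 4 (by decide) (by decide) (by decide) (by simp [F32Edges])
  have k4 := key 2 3 4 (by decide) (by decide) (by decide) (by simp [F32Edges])
  omega

lemma HA_matching {n : ℕ} (A : Finset (Fin n)) : MatchingAtMost (HA A) A.card := by
  intro M hM hd
  have h1 : (M.biUnion (fun e => e ∩ A)).card = M.card := by
    rw [card_biUnion, sum_congr rfl (g := fun _ => 1)]
    · simp
    · intro e he
      have := hM he
      simp only [HA, mem_filter] at this
      exact this.2.2
    · intro e he f hf hef
      exact (hd he hf hef).mono inter_subset_left inter_subset_left
  rw [← h1]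
  apply card_le_card
  intro x; simp

lemma HA_perm {n : ℕ} (A B : Finset (Fin n)) (h : A.card = B.card) :
    ∃ σ : Equiv.Perm (Fin n), HA B = (HA A).image (fun e => e.image σ) := by
  let e : {x // x ∈ A} ≃ {x // x ∈ B} := Finset.equivOfCardEq h
  let σ : Equiv.Perm (Fin n) := e.extendSubtype
  have hσ : A.image σ = B := by
    apply eq_of_subset_of_card_le
    · intro x hx
      obtain ⟨y, hy, rfl⟩ := mem_image.1 hx
      exact e.extendSubtype_mem y hy
    · rw [card_image_of_injective _ σ.injective, h]
  refine ⟨σ, ?_⟩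
  symm
  apply eq_of_subset_of_card_le
  · intro x hx
    obtain ⟨y, hy, rfl⟩ := mem_image.1 hx
    simp only [HA, mem_filter, mem_univ, true_and] at hy ⊢
    rw [← hσ, ← image_inter _ _ σ.injective, card_image_of_injective _ σ.injective,
      card_image_of_injective _ σ.injective]
    exact hy
  · rw [card_image_of_injective _ (image_injective σ.injective), HA_card, HA_card, h]

lemma two_choose (a : ℕ) : (2 * (a.choose 2) : ℤ) = (a : ℤ) * (a - 1) := by
  induction a with
  | zero => simp
  | succ k ih =>
    rw [Nat.choose_succ_succ' k 1, Nat.choose_one_right]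
    push_cast
    linarith

lemma arith1 (n s : ℕ) (hs : 2 ≤ s) (hn : 12 * s ^ 2 ≤ n) :
    s * s * n < (n - s).choose 2 := by
  have h := two_choose (n - s)
  have hsn : s ≤ n := by nlinarith
  rw [Nat.cast_sub hsn] at h
  zify at hs hn ⊢
  nlinarith [mul_le_mul_of_nonneg_right hn (show (0:ℤ) ≤ n by positivity), mul_nonneg (show (0:ℤ) ≤ n by positivity) (sub_nonneg.2 hs), mul_nonneg (mul_nonneg (show (0:ℤ) ≤ n by positivity) (sub_nonneg.2 hs)) (show (0:ℤ) ≤ s by positivity)]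

lemma arith2 (n s m k : ℕ) (hs : 2 ≤ s) (hn : 12 * s ^ 2 ≤ n) (hm : 1 ≤ m) (hk : k + m = s) :
    3 * m * (3 * m * n) + k * (n - 1).choose 2 < s * (n - s).choose 2 := by
  have hsn : s ≤ n := by nlinarith
  have h := two_choose (n - s)
  have h' := two_choose (n - 1)
  rw [Nat.cast_sub hsn] at h
  rw [Nat.cast_sub (by omega)] at h'
  have hk' : (k : ℤ) = s - m := by omega
  zify at hs hn hm hsn ⊢
  have hms : (m : ℤ) ≤ s := by omega
  have hn0 : (0 : ℤ) < n := by omega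
  have key : (18 * m ^ 2 + 2 * (s - m) * (s - 1) : ℤ) < m * (12 * s ^ 2 - 2 * s - 1) := by
    have e1 : (18 * m ^ 2 : ℤ) ≤ m * (18 * s) := by nlinarith
    have e2 : (2 * (s - m) * (s - 1) : ℤ) ≤ m * (2 * (s - 1) ^ 2) := by
      have : (s - m : ℤ) ≤ m * (s - 1) := by nlinarith
      nlinarith
    have e3 : (18 * s + 2 * (s - 1) ^ 2 : ℤ) < 12 * s ^ 2 - 2 * s - 1 := by nlinarith
    nlinarith
  have key2 : (m : ℤ) * (12 * s ^ 2 - 2 * s - 1) * n ≤ m * ((n - s) * (n - s - 1)) := by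
    rw [mul_assoc]
    apply mul_le_mul_of_nonneg_left _ (by positivity)
    nlinarith
  have key3 := mul_lt_mul_of_pos_right key hn0
  have key4 : ((s : ℤ) - m) * ((n - 1) * (n - 2)) - (s - m) * ((n - s) * (n - s - 1)) ≤ 2 * (s - m) * (s - 1) * n := by
    have : ((n : ℤ) - 1) * (n - 2) - (n - s) * (n - s - 1) ≤ 2 * (s - 1) * n := by nlinarith
    nlinarith
  rw [hk']
  push_cast at h'
  have h2 : (2 : ℤ) * ((s - m) * ((n - 1).choose 2)) = (s - m) * ((n - 1) * (n - 2)) := by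
    linear_combination ((s : ℤ) - m) * h'
  have h3 : (2 : ℤ) * (s * ((n - s).choose 2)) = s * ((n - s) * (n - s - 1)) := by
    linear_combination (s : ℤ) * h
  nlinarith

lemma arith3 (N s X P Q : ℕ) (hs : 2 ≤ s) (hN : 23 * s ≤ N) (h0 : 0 < Q)
    (h1 : Q * ((N - 1) * (N - 1) - (N - 1)) ≤ 3 * (P * (s * N))) (h2 : P ≤ X * 4) : Q < X := by
  by_contra hX
  push Not at hX
  have e1 : P * (s * N) ≤ (Q * 4) * (s * N) := Nat.mul_le_mul_right _ (by omega)
  have e2 : Q * ((N - 1) * (N - 1) - (N - 1)) ≤ Q * (12 * (s * N)) := by nlinarith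
  have e3 := Nat.le_of_mul_le_mul_left e2 h0
  have e4 : (N - 1) * (N - 1) - (N - 1) = (N - 1) * (N - 2) := by
    obtain ⟨t, rfl⟩ : ∃ t, N = t + 2 := ⟨N - 2, by omega⟩
    simp only [Nat.add_sub_cancel, show t + 2 - 1 = t + 1 by omega]
    rw [← Nat.mul_sub_one]; rfl
  rw [e4] at e3
  obtain ⟨t, rfl⟩ : ∃ t, N = t + 2 := ⟨N - 2, by omega⟩
  simp only [Nat.add_sub_cancel, show t + 2 - 1 = t + 1 by omega] at e3
  nlinarith

lemma mk_HA {n : ℕ} {A : Finset (Fin n)} {a x y : Fin n} (ha : a ∈ A) (hx : x ∉ A) (hy : y ∉ A)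
    (hxy : x ≠ y) : {a, x, y} ∈ HA A := by
  have h1 : a ≠ x := fun h => hx (h ▸ ha)
  have h2 : a ≠ y := fun h => hy (h ▸ ha)
  simp only [HA, mem_filter, mem_univ, true_and]
  refine ⟨card_eq_three.2 ⟨a, x, y, h1, h2, hxy, rfl⟩, ?_⟩
  rw [insert_inter_of_mem ha, insert_inter_of_notMem hx, singleton_inter_of_notMem hy]; simp

lemma full {n s : ℕ} (hs : 2 ≤ s) (hn : 12 * s ^ 2 ≤ n) {H : Finset (Finset (Fin n))}
    (hU : Uniform3 H) (hF : ¬ HasCopy F32Edges H) (A : Finset (Fin n)) (hA : A.card = s)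
    (hcov : ∀ e ∈ H, (e ∩ A).Nonempty) :
    H.card < s * (n - s).choose 2 ∨ H ⊆ HA A := by
  by_cases hsub : H ⊆ HA A
  · exact Or.inr hsub
  left
  have hAc : (Aᶜ).card = n - s := by rw [card_compl, Fintype.card_fin, hA]
  suffices h : (H \ HA A).card < (HA A \ H).card by
    have h1 := card_sdiff_add_card (HA A) H
    have h2 := card_sdiff_add_card H (HA A)
    rw [union_comm] at h2
    have h3 := HA_card A
    rw [hA] at h3
    omega
  have hY0 : 0 < (H \ HA A).card := by
    rw [card_pos, sdiff_nonempty]; exact hsub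
  have hY2 : ∀ e ∈ H \ HA A, 2 ≤ (e ∩ A).card := by
    intro e he
    rw [mem_sdiff] at he
    have h1 := (hcov e he.1).card_pos
    have h2 : (e ∩ A).card ≠ 1 := fun h => he.2 (by
      simp only [HA, mem_filter, mem_univ, true_and]
      exact ⟨hU e he.1, h⟩)
    omega
  by_cases hc : ∃ e ∈ H, e ⊆ A
  · obtain ⟨e, heH, heA⟩ := hc
    obtain ⟨a, b, c, hab, hac, hbc, rfl⟩ := card_eq_three.1 (hU e heH)
    have ha : a ∈ A := heA (by simp)
    have hb : b ∈ A := heA (by simp)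
    have hc : c ∈ A := heA (by simp)
    have hX : (n - s).choose 2 ≤ (HA A \ H).card := by
      rw [← hAc, ← card_powersetCard]
      refine (card_le_card ?_).trans (card_image_le (f := fun e => e ∩ Aᶜ))
      intro p hp
      rw [mem_powersetCard] at hp
      obtain ⟨hpA, hp2⟩ := hp
      obtain ⟨x, y, hxy, rfl⟩ := card_eq_two.1 hp2
      have hx : x ∉ A := by simpa using hpA (show x ∈ ({x, y} : Finset _) by simp)
      have hy : y ∉ A := by simpa using hpA (show y ∈ ({x, y} : Finset _) by simp)
      have key : ∃ d ∈ A, {d, x, y} ∉ H := by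
        by_contra hcon
        push Not at hcon
        exact f32 hF hab hac (by grind) (by grind) hbc (by grind) (by grind) (by grind) (by grind) hxy
          heH (hcon a ha) (hcon b hb) (hcon c hc)
      obtain ⟨d, hd, hdH⟩ := key
      rw [mem_image]
      refine ⟨{d, x, y}, mem_sdiff.2 ⟨mk_HA hd hx hy hxy, hdH⟩, ?_⟩
      ext z
      simp only [mem_inter, mem_insert, mem_singleton, mem_compl]
      grind
    have hY : (H \ HA A).card ≤ s * s * n := by
      have hsub : H \ HA A ⊆ (A.offDiag).biUnion (fun p => H.filter (fun e => p.1 ∈ e ∧ p.2 ∈ e)) := by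
        intro e he
        obtain ⟨u, hu, v, hv, huv⟩ := one_lt_card.1 (hY2 e he)
        rw [mem_inter] at hu hv
        rw [mem_biUnion]
        refine ⟨(u, v), mem_offDiag.2 ⟨hu.2, hv.2, huv⟩, mem_filter.2 ⟨(mem_sdiff.1 he).1, hu.1, hv.1⟩⟩
      refine (card_le_card hsub).trans ((card_biUnion_le_card_mul _ _ n ?_).trans ?_)
      · intro p hp
        have := star_card hU p.1 p.2 (mem_offDiag.1 hp).2.2
        omega
      · apply Nat.mul_le_mul_right
        rw [offDiag_card, hA]
        omega
    have := arith1 n s hs hn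
    omega
  · push Not at hc
    set N := n - s with hN
    let Q := ((A ×ˢ A) ×ˢ Aᶜ).filter (fun q => q.1.1 ≠ q.1.2 ∧ {q.1.1, q.1.2, q.2} ∈ H)
    let P := (A ×ˢ (Aᶜ ×ˢ Aᶜ)).filter (fun p => p.2.1 ≠ p.2.2 ∧ {p.1, p.2.1, p.2.2} ∉ H)
    have hYQ : (H \ HA A).card ≤ Q.card := by
      refine (card_le_card ?_).trans (card_image_le (s := Q) (f := fun q => {q.1.1, q.1.2, q.2}))
      intro e he
      obtain ⟨u, hu, v, hv, huv⟩ := one_lt_card.1 (hY2 e he)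
      rw [mem_inter] at hu hv
      have heH := (mem_sdiff.1 he).1
      obtain ⟨y, hye, hyA⟩ := not_subset.1 (hc e heH)
      have hee : {u, v, y} = e := by
        apply eq_of_subset_of_card_le
        · intro z; simp only [mem_insert, mem_singleton]; grind
        · rw [hU e heH, card_eq_three.2 ⟨u, v, y, huv, by grind, by grind, rfl⟩]
      rw [mem_image]
      refine ⟨((u, v), y), ?_, hee⟩
      simp only [Q, mem_filter, mem_product, mem_compl]
      exact ⟨⟨⟨hu.2, hv.2⟩, hyA⟩, huv, hee ▸ heH⟩
    have hPX : P.card ≤ (HA A \ H).card * 4 := by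
      refine (card_le_card (t := (HA A \ H).biUnion
        (fun x => (x ∩ A) ×ˢ ((x ∩ Aᶜ) ×ˢ (x ∩ Aᶜ)))) ?_).trans (card_biUnion_le_card_mul _ _ 4 ?_)
      · rintro ⟨a, x, y⟩ hp
        simp only [P, mem_filter, mem_product, mem_compl] at hp
        rw [mem_biUnion]
        refine ⟨{a, x, y}, mem_sdiff.2 ⟨mk_HA hp.1.1 hp.1.2.1 hp.1.2.2 hp.2.1, hp.2.2⟩, ?_⟩
        simp [hp.1]
      · intro x hx
        rw [mem_sdiff] at hx
        have hx := hx.1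
        simp only [HA, mem_filter, mem_univ, true_and] at hx
        have : (x ∩ A).card + (x ∩ Aᶜ).card = x.card := by
          rw [← sdiff_eq_inter_compl, card_inter_add_card_sdiff]
        have h2 : (x ∩ Aᶜ).card = 2 := by omega
        rw [card_product, card_product, h2, hx.2]
    have hmain : Q.card * ((N - 1) * (N - 1) - (N - 1)) ≤ 3 * (P.card * (s * N)) := by
      let C : Finset (Σ _ : (Fin n × Fin n) × Fin n, Fin n × Fin n) :=
        Q.sigma (fun q => (Aᶜ.erase q.2).offDiag)
      have hC : C.card = Q.card * ((N - 1) * (N - 1) - (N - 1)) := by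
        rw [card_sigma, sum_const_nat]
        intro q hq
        have : q.2 ∈ Aᶜ := by
          simp only [Q, mem_filter, mem_product] at hq
          exact hq.1.2
        rw [offDiag_card, card_erase_of_mem this, hAc]
      have hPA : (P ×ˢ (A ×ˢ Aᶜ)).card = P.card * (s * N) := by
        rw [card_product, card_product, hA, hAc]
      rw [← hC, ← hPA]
      let C1 := C.filter (fun c => {c.1.1.1, c.1.2, c.2.1} ∉ H)
      let C2 := C.filter (fun c => {c.1.1.1, c.1.2, c.2.2} ∉ H)
      let C3 := C.filter (fun c => {c.1.1.2, c.2.1, c.2.2} ∉ H)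
      have hCsub : C ⊆ C1 ∪ (C2 ∪ C3) := by
        rintro ⟨⟨⟨a, a'⟩, y⟩, b, b'⟩ h
        by_contra hcon
        simp only [C1, C2, C3, mem_union, mem_filter, h, true_and, not_or, not_not] at hcon
        obtain ⟨k1, k2, k3⟩ := hcon
        simp only [C, Q, mem_sigma, mem_filter, mem_product, mem_offDiag, mem_erase, mem_compl] at h
        obtain ⟨⟨⟨⟨ha, ha'⟩, hy⟩, haa, haay⟩, ⟨hby, hb⟩, ⟨hb'y, hb'⟩, hbb⟩ := h
        refine f32 hF (a := a') (b := b) (c := b') (d := a) (e := y) (by grind) (by grind) (by grind) (by grind)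
          hbb (by grind) (by grind) (by grind) (by grind) (by grind) k3 ?_ ?_ ?_
        · rwa [insert_comm]
        · convert k1 using 1; ext z; simp only [mem_insert, mem_singleton]; tauto
        · convert k2 using 1; ext z; simp only [mem_insert, mem_singleton]; tauto
      have hC1 : C1.card ≤ (P ×ˢ (A ×ˢ Aᶜ)).card := by
        apply card_le_card_of_injOn (fun c => ((c.1.1.1, c.1.2, c.2.1), (c.1.1.2, c.2.2)))
        · rintro ⟨⟨⟨a, a'⟩, y⟩, b, b'⟩ h
          simp only [C1, C, Q, P, mem_coe, mem_sigma, mem_filter, mem_product, mem_offDiag, mem_erase, mem_compl] at h ⊢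
          grind
        · rintro ⟨⟨⟨a, a'⟩, y⟩, b, b'⟩ h ⟨⟨⟨c, c'⟩, z⟩, d, d'⟩ h' heq
          simp only [Prod.mk.injEq] at heq
          grind
      have hC2 : C2.card ≤ (P ×ˢ (A ×ˢ Aᶜ)).card := by
        apply card_le_card_of_injOn (fun c => ((c.1.1.1, c.1.2, c.2.2), (c.1.1.2, c.2.1)))
        · rintro ⟨⟨⟨a, a'⟩, y⟩, b, b'⟩ h
          simp only [C2, C, Q, P, mem_coe, mem_sigma, mem_filter, mem_product, mem_offDiag, mem_erase, mem_compl] at h ⊢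
          grind
        · rintro ⟨⟨⟨a, a'⟩, y⟩, b, b'⟩ h ⟨⟨⟨c, c'⟩, z⟩, d, d'⟩ h' heq
          simp only [Prod.mk.injEq] at heq
          grind
      have hC3 : C3.card ≤ (P ×ˢ (A ×ˢ Aᶜ)).card := by
        apply card_le_card_of_injOn (fun c => ((c.1.1.2, c.2.1, c.2.2), (c.1.1.1, c.1.2)))
        · rintro ⟨⟨⟨a, a'⟩, y⟩, b, b'⟩ h
          simp only [C3, C, Q, P, mem_coe, mem_sigma, mem_filter, mem_product, mem_offDiag, mem_erase, mem_compl] at h ⊢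
          grind
        · rintro ⟨⟨⟨a, a'⟩, y⟩, b, b'⟩ h ⟨⟨⟨c, c'⟩, z⟩, d, d'⟩ h' heq
          simp only [Prod.mk.injEq] at heq
          grind
      have g1 := card_le_card hCsub
      have g2 := card_union_le C1 (C2 ∪ C3)
      have g3 := card_union_le C2 C3
      omega
    have hN23 : 23 * s ≤ N := by
      have : 24 * s ≤ 12 * s ^ 2 := by nlinarith
      omega
    have := arith3 N s _ _ _ hs hN23 (by omega) hmain hPX
    omega

lemma one_case {n : ℕ} (hn : 12 ≤ n) {H : Finset (Finset (Fin n))}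
    (hU : Uniform3 H) (hM : MatchingAtMost H 1) :
    H.card < (n - 1).choose 2 ∨ ∃ v, ∀ e ∈ H, v ∈ e := by
  by_cases hcv : ∃ v, ∀ e ∈ H, v ∈ e
  · exact Or.inr hcv
  left
  push Not at hcv
  choose f hfH hf using hcv
  have hint : ∀ e ∈ H, ∀ g ∈ H, ∃ x ∈ e, x ∈ g := by
    intro e he g hg
    by_contra hcon
    push Not at hcon
    have hd : Disjoint e g := disjoint_left.2 hcon
    have hne : e ≠ g := by
      rintro rfl
      have h3 := hU e he
      obtain ⟨x, hx⟩ := card_pos.1 (by omega : 0 < e.card)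
      exact hcon x hx hx
    have := hM {e, g} (by intro z; simp only [mem_insert, mem_singleton]; rintro (rfl | rfl) <;> assumption)
      (by
        intro a ha b hb hab
        simp only [coe_insert, coe_singleton, Set.mem_insert_iff, Set.mem_singleton_iff] at ha hb
        rcases ha with rfl | rfl <;> rcases hb with rfl | rfl
        · exact absurd rfl hab
        · exact hd
        · exact hd.symm
        · exact absurd rfl hab)
    rw [card_pair hne] at this
    omega
  have hch := two_choose (n - 1)
  rw [Nat.cast_sub (by omega)] at hch
  by_cases hp : ∃ u v, u ≠ v ∧ ∀ e ∈ H, u ∈ e ∨ v ∈ e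
  · obtain ⟨u, v, huv, hcov⟩ := hp
    have hvg : v ∈ f u := (hcov _ (hfH u)).resolve_left (hf u)
    have huh : u ∈ f v := (hcov _ (hfH v)).resolve_right (hf v)
    have hsub : H ⊆ H.filter (fun e => u ∈ e ∧ v ∈ e) ∪
        (((f u).erase v).biUnion (fun x => H.filter (fun e => u ∈ e ∧ x ∈ e)) ∪
        ((f v).erase u).biUnion (fun x => H.filter (fun e => v ∈ e ∧ x ∈ e))) := by
      intro e he
      simp only [mem_union, mem_filter, mem_biUnion, mem_erase, he, true_and]
      obtain ⟨x, hx, hx'⟩ := hint e he _ (hfH u)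
      obtain ⟨y, hy, hy'⟩ := hint e he _ (hfH v)
      by_cases h1 : u ∈ e
      · by_cases h2 : v ∈ e
        · exact Or.inl ⟨h1, h2⟩
        · exact Or.inr (Or.inl ⟨x, ⟨fun h => h2 (h ▸ hx), hx'⟩, h1, hx⟩)
      · have h2 : v ∈ e := (hcov e he).resolve_left h1
        exact Or.inr (Or.inr ⟨y, ⟨fun h => h1 (h ▸ hy), hy'⟩, h2, hy⟩)
    have g0 := star_card hU u v huv
    have g1 : (((f u).erase v).biUnion (fun x => H.filter (fun e => u ∈ e ∧ x ∈ e))).card ≤ 2 * (n - 2) := by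
      refine (card_biUnion_le_card_mul _ _ (n - 2) ?_).trans ?_
      · intro x hx
        exact star_card hU u x (by rintro rfl; exact hf _ (mem_of_mem_erase hx))
      · rw [card_erase_of_mem hvg, hU _ (hfH u)]
    have g2 : (((f v).erase u).biUnion (fun x => H.filter (fun e => v ∈ e ∧ x ∈ e))).card ≤ 2 * (n - 2) := by
      refine (card_biUnion_le_card_mul _ _ (n - 2) ?_).trans ?_
      · intro x hx
        exact star_card hU v x (by rintro rfl; exact hf _ (mem_of_mem_erase hx))
      · rw [card_erase_of_mem huh, hU _ (hfH v)]
    have k1 := card_le_card hsub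
    have k2 := card_union_le (H.filter (fun e => u ∈ e ∧ v ∈ e))
      (((f u).erase v).biUnion (fun x => H.filter (fun e => u ∈ e ∧ x ∈ e)) ∪
        ((f v).erase u).biUnion (fun x => H.filter (fun e => v ∈ e ∧ x ∈ e)))
    have k3 := card_union_le (((f u).erase v).biUnion (fun x => H.filter (fun e => u ∈ e ∧ x ∈ e)))
        (((f v).erase u).biUnion (fun x => H.filter (fun e => v ∈ e ∧ x ∈ e)))
    have k4 : H.card ≤ 5 * (n - 2) := by omega
    refine lt_of_le_of_lt k4 ?_
    zify [show 2 ≤ n by omega]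
    push_cast at hch
    have : (12 : ℤ) ≤ n := by exact_mod_cast hn
    nlinarith
  · push Not at hp
    have hco : ∀ u v, u ≠ v → (H.filter (fun e => u ∈ e ∧ v ∈ e)).card ≤ 3 := by
      intro u v huv
      obtain ⟨g, hg, hug, hvg⟩ := hp u v huv
      rw [← hU g hg]
      refine (card_le_card ?_).trans (card_image_le (s := g) (f := fun w => ({u, v, w} : Finset (Fin n))))
      intro e he
      rw [mem_filter] at he
      obtain ⟨x, hx, hx'⟩ := hint e he.1 g hg
      rw [mem_image]
      refine ⟨x, hx', ?_⟩
      apply eq_of_subset_of_card_le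
      · intro z; simp only [mem_insert, mem_singleton]; grind
      · rw [hU e he.1, card_eq_three.2 ⟨u, v, x, huv, by grind, by grind, rfl⟩]
    have k : H.card ≤ 3 * (3 * 3) := by
      have hsub : H ⊆ (f ⟨0, by omega⟩).biUnion (fun a => (f a).biUnion
          (fun x => H.filter (fun e => a ∈ e ∧ x ∈ e))) := by
        intro e he
        obtain ⟨a, ha, ha'⟩ := hint e he _ (hfH ⟨0, by omega⟩)
        obtain ⟨x, hx, hx'⟩ := hint e he _ (hfH a)
        simp only [mem_biUnion, mem_filter]
        exact ⟨a, ha', x, hx', he, ha, hx⟩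
      refine (card_le_card hsub).trans ((card_biUnion_le_card_mul _ _ (3 * 3) ?_).trans ?_)
      · intro a _
        refine (card_biUnion_le_card_mul _ _ 3 ?_).trans ?_
        · intro x hx
          exact hco a x (fun h => hf a (h ▸ hx))
        · rw [hU _ (hfH a)]
      · rw [hU _ (hfH _)]
    refine lt_of_le_of_lt k ?_
    zify
    push_cast at hch
    have : (12 : ℤ) ≤ n := by exact_mod_cast hn
    nlinarith

lemma ge2_case {n s : ℕ} (hs : 2 ≤ s) (hn : 12 * s ^ 2 ≤ n) {H : Finset (Finset (Fin n))}
    (hU : Uniform3 H) (hM : MatchingAtMost H s) :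
    H.card < s * (n - s).choose 2 ∨
      ∃ A : Finset (Fin n), A.card = s ∧ ∀ e ∈ H, (e ∩ A).Nonempty := by
  classical
  let F : Finset (Finset (Fin n)) := univ.filter (fun A => A.card ≤ s ∧
    MatchingAtMost (H.filter (fun e => Disjoint e A)) (s - A.card))
  have hF0 : F.Nonempty := ⟨∅, by simpa [F] using hM⟩
  obtain ⟨A, hAF, hmax⟩ := exists_max_image F card hF0
  simp only [F, mem_filter, mem_univ, true_and] at hAF hmax
  obtain ⟨hAs, hAM⟩ := hAF
  rcases hAs.eq_or_lt with hAs | hAs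
  · right
    refine ⟨A, hAs, fun e he => ?_⟩
    by_contra hcon
    rw [not_nonempty_iff_eq_empty, ← disjoint_iff_inter_eq_empty] at hcon
    have := hAM {e} (by simpa using ⟨he, hcon⟩) (by simp)
    rw [card_singleton] at this
    omega
  left
  obtain ⟨m, hm⟩ : ∃ m, A.card + m = s := ⟨s - A.card, by omega⟩
  have hm1 : s - A.card = m := by omega
  rw [hm1] at hAM
  have hT : ∀ v, v ∉ A → ∃ T : Finset (Fin n), T.card ≤ 3 * m ∧ (∀ x ∈ T, x ∉ A ∧ x ≠ v) ∧
      ∀ e ∈ H, Disjoint e A → ∃ x ∈ T, x ∈ e := by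
    intro v hv
    have h1 : ¬ MatchingAtMost (H.filter (fun e => Disjoint e (insert v A))) (s - (insert v A).card) := by
      intro h
      have := hmax (insert v A) ⟨by rw [card_insert_of_notMem hv]; omega, h⟩
      rw [card_insert_of_notMem hv] at this
      omega
    rw [card_insert_of_notMem hv] at h1
    unfold MatchingAtMost at h1
    push Not at h1
    obtain ⟨M, hMs, hMd, hMc⟩ := h1
    have hMs' : ∀ e ∈ M, e ∈ H ∧ v ∉ e ∧ Disjoint e A := by
      intro e he
      have := hMs he
      rw [mem_filter, disjoint_insert_right] at this
      exact this
    have hMH : M ⊆ H.filter (fun e => Disjoint e A) := fun e he =>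
      mem_filter.2 ⟨(hMs' e he).1, (hMs' e he).2.2⟩
    have hMm := hAM M hMH hMd
    refine ⟨M.biUnion id, ?_, ?_, ?_⟩
    · refine (card_biUnion_le_card_mul _ _ 3 (fun e he => (hU e (hMs' e he).1).le)).trans ?_
      omega
    · intro x hx
      rw [mem_biUnion] at hx
      obtain ⟨e, he, hxe⟩ := hx
      exact ⟨disjoint_left.1 (hMs' e he).2.2 hxe, fun h => (hMs' e he).2.1 (h ▸ hxe)⟩
    · intro e he heA
      by_contra hcon
      push Not at hcon
      have hd : ∀ g ∈ M, Disjoint e g := fun g hg => disjoint_right.2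
        (fun x hx => hcon x (mem_biUnion.2 ⟨g, hg, hx⟩))
      have heM : e ∉ M := by
        intro h
        have h3 := hU e he
        have := hd e h
        rw [disjoint_self] at this
        rw [this] at h3
        simp at h3
      have := hAM (insert e M) (insert_subset (mem_filter.2 ⟨he, heA⟩) hMH) (by
        rw [coe_insert]
        refine hMd.insert ?_
        intro g hg _
        exact ⟨hd g hg, (hd g hg).symm⟩)
      rw [card_insert_of_notMem heM] at this
      omega
  choose! T hT1 hT2 hT3 using hT
  have hsn : s ≤ n := by nlinarith
  obtain ⟨v0, hv0⟩ : ∃ v, v ∉ A := by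
    by_contra hcon
    push Not at hcon
    have : A = univ := by ext; simp [hcon]
    rw [this, card_univ, Fintype.card_fin] at hAs
    omega
  have hsub : H ⊆ ((T v0).biUnion (fun a => (T a).biUnion
      (fun x => H.filter (fun e => a ∈ e ∧ x ∈ e)))) ∪ A.biUnion (fun v => H.filter (fun e => v ∈ e)) := by
    intro e he
    simp only [mem_union, mem_biUnion, mem_filter]
    by_cases hd : Disjoint e A
    · left
      obtain ⟨a, ha, hae⟩ := hT3 v0 hv0 e he hd
      obtain ⟨x, hx, hxe⟩ := hT3 a (hT2 v0 hv0 a ha).1 e he hd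
      exact ⟨a, ha, x, hx, he, hae, hxe⟩
    · right
      rw [not_disjoint_iff] at hd
      obtain ⟨v, h1, h2⟩ := hd
      exact ⟨v, h2, he, h1⟩
  have g1 : ((T v0).biUnion (fun a => (T a).biUnion
      (fun x => H.filter (fun e => a ∈ e ∧ x ∈ e)))).card ≤ 3 * m * (3 * m * n) := by
    refine (card_biUnion_le_card_mul _ _ (3 * m * n) ?_).trans (Nat.mul_le_mul_right _ (hT1 v0 hv0))
    intro a ha
    have haA := (hT2 v0 hv0 a ha).1
    refine (card_biUnion_le_card_mul _ _ n ?_).trans (Nat.mul_le_mul_right _ (hT1 a haA))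
    intro x hx
    have := star_card hU a x (hT2 a haA x hx).2.symm
    omega
  have g2 : (A.biUnion (fun v => H.filter (fun e => v ∈ e))).card ≤ A.card * (n - 1).choose 2 :=
    card_biUnion_le_card_mul _ _ _ (fun v _ => deg_card hU v)
  have g3 := (card_le_card hsub).trans (card_union_le _ _)
  have g4 := arith2 n s m A.card hs hn (by omega) hm
  omega

lemma main_dich {n s : ℕ} (hn : 12 * s ^ 2 ≤ n) {H : Finset (Finset (Fin n))}
    (hU : Uniform3 H) (hF : ¬ HasCopy F32Edges H) (hM : MatchingAtMost H s) :
    H.card < s * (n - s).choose 2 ∨ ∃ A : Finset (Fin n), A.card = s ∧ H ⊆ HA A := by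
  rcases Nat.lt_or_ge s 2 with hs | hs
  · interval_cases s
    · right
      refine ⟨∅, rfl, fun e he => ?_⟩
      have := hM {e} (by simpa using he) (by simp)
      simp at this
    · rcases one_case (by omega) hU hM with h | ⟨v, hv⟩
      · left; omega
      · right
        refine ⟨{v}, by simp, fun e he => ?_⟩
        simp only [HA, mem_filter, mem_univ, true_and]
        exact ⟨hU e he, by rw [inter_singleton_of_mem (hv e he)]; simp⟩
  · rcases ge2_case hs hn hU hM with h | ⟨A, hA, hc⟩
    · exact Or.inl h
    · rcases full hs hn hU hF A hA hc with h | h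
      · exact Or.inl h
      · exact Or.inr ⟨A, hA, h⟩

theorem stmt_13 (n s : ℕ) (hn : 12 * s ^ 2 ≤ n) :
    IsGreatest {m | ∃ H : Finset (Finset (Fin n)), Uniform3 H ∧
      ¬ HasCopy F32Edges H ∧ MatchingAtMost H s ∧ H.card = m}
      (s * (n - s).choose 2) ∧
    ∀ H : Finset (Finset (Fin n)), Uniform3 H → ¬ HasCopy F32Edges H →
      MatchingAtMost H s → H.card = s * (n - s).choose 2 →
      ∃ σ : Equiv.Perm (Fin n), H = (Hns n s).image (fun e => e.image σ) := by
  have hsn : s ≤ n := by nlinarith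
  have hcard : (Finset.univ.filter (fun v : Fin n => (v : ℕ) < s)).card = s := by
    rw [Fin.card_filter_val_lt]; omega
  have hbound : ∀ A : Finset (Fin n), A.card = s → (HA A).card = s * (n - s).choose 2 := by
    intro A hA; rw [HA_card, hA]
  refine ⟨⟨⟨Hns n s, ?_, ?_, ?_, ?_⟩, ?_⟩, ?_⟩
  · intro e he
    simp only [Hns, mem_filter] at he
    exact he.2.1
  · rw [Hns_eq]; exact HA_free _
  · have := HA_matching (Finset.univ.filter (fun v : Fin n => (v : ℕ) < s))
    rwa [hcard, ← Hns_eq] at this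
  · rw [Hns_eq]; exact hbound _ hcard
  · rintro m ⟨H, hU, hF, hM, rfl⟩
    rcases main_dich hn hU hF hM with h | ⟨A, hA, h⟩
    · exact h.le
    · rw [← hbound A hA]; exact card_le_card h
  · intro H hU hF hM hc
    rcases main_dich hn hU hF hM with h | ⟨A, hA, h⟩
    · omega
    · have hHA : H = HA A := eq_of_subset_of_card_le h (by rw [hbound A hA, hc])
      rw [hHA, Hns_eq]
      exact HA_perm _ _ (by rw [hcard, hA])
end
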